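/- arXiv:2304.03026 — 3 statements merged into one kernel-verified Lean document; each statement's English description precedes it below -/
import Mathlib

section
/- Let I be a finite index set, g : I → ℝ², r : I → ℝ with r(i) ≥ 0 for all i, and let S, D ∈ ℝ². Then the following are equivalent: (a) there exists a continuous path u : [0,1] → ℝ² with u(0) = S, u(1) = D, and u(t) ∈ ⋃_{i∈I} B̄(g(i), r(i)) for all t ∈ [0,1]; (b) there exist k ≥ 1 and indices i₁,…,i_k ∈ I such that S ∈ B̄(g(i₁), r(i₁)), D ∈ B̄(g(i_k), r(i_k)), and dist(g(i_j), g(i_{j+1})) ≤ r(i_j) + r(i_{j+1}) for every 1 ≤ j ≤ k−1. -/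
/-!
A path is connected, so it cannot cross between two disjoint closed sets. The union of the balls
reachable from a ball containing `S` through successive intersections and the union of the remaining
balls are two such sets, closed because the family is locally finite; so the path stays in the
reachable balls. Conversely, a chain of intersecting path-connected sets is traversed by
concatenating paths. In a normed space two closed balls meet exactly when the distance of their
centres is at most the sum of their radii.
-/

open Metric Relation Set

section Chains

variable {α : Type*} {R : α → α → Prop}

lemma exists_reflTransGen_iff_exists_fin_sequence {p q : α → Prop} :
    (∃ a b, p a ∧ q b ∧ ReflTransGen R a b) ↔
      ∃ (k : ℕ) (hk : 1 ≤ k) (seq : Fin k → α),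
        p (seq ⟨0, hk⟩) ∧ q (seq ⟨k - 1, Nat.sub_lt hk one_pos⟩) ∧
        ∀ (j : ℕ) (h : j + 1 < k), R (seq ⟨j, Nat.lt_of_succ_lt h⟩) (seq ⟨j + 1, h⟩) := by
  constructor
  · rintro ⟨a, b, ha, hb, hab⟩
    obtain ⟨l, hl, hchain, rfl, rfl⟩ := List.exists_isChain_ne_nil_of_relationReflTransGen hab
    refine ⟨l.length, List.length_pos_iff.2 hl, l.get, ?_, ?_, hchain.getElem⟩
    · simpa only [List.get_eq_getElem, List.head_eq_getElem] using ha
    · simpa only [List.get_eq_getElem, List.getLast_eq_getElem] using hb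
  · rintro ⟨k, hk, seq, hp, hq, hstep⟩
    have hne : List.ofFn seq ≠ [] := by
      simpa only [ne_eq, List.ofFn_eq_nil_iff] using Nat.one_le_iff_ne_zero.1 hk
    have hreach := List.relationReflTransGen_of_exists_isChain (List.ofFn seq)
      (List.isChain_ofFn.2 hstep) hne
    rw [List.head_ofFn, List.getLast_ofFn] at hreach
    exact ⟨_, _, hp, hq, hreach⟩

end Chains

section Covers

variable {X ι : Type*} [TopologicalSpace X] {s : ι → Set X} {T : Set X} {i j : ι} {x y : X}

lemma subset_biUnion_of_isPreconnected_of_disjoint (hs : LocallyFinite s)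
    (hclosed : ∀ i, IsClosed (s i)) (hT : IsPreconnected T) (hcover : T ⊆ ⋃ i, s i) {C : Set ι}
    (hC : ∀ i ∈ C, ∀ j ∉ C, Disjoint (s i) (s j)) (hmeets : (T ∩ ⋃ i ∈ C, s i).Nonempty) :
    T ⊆ ⋃ i ∈ C, s i := by
  have isClosed_biUnion (K : Set ι) : IsClosed (⋃ i ∈ K, s i) := by
    rw [biUnion_eq_iUnion]
    exact (hs.comp_injective Subtype.val_injective).isClosed_iUnion fun i => hclosed i
  have hdisjoint : Disjoint (⋃ i ∈ C, s i) (⋃ j ∈ Cᶜ, s j) := by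
    simp only [disjoint_iUnion_left, disjoint_iUnion_right]
    exact fun j hj i hi => hC i hi j hj
  have hsplit : T ⊆ (⋃ i ∈ C, s i) ∪ ⋃ j ∈ Cᶜ, s j := by
    rwa [← biUnion_union, union_compl_self, biUnion_univ]
  refine (isPreconnected_iff_subset_of_disjoint_closed.1 hT _ _ (isClosed_biUnion C)
    (isClosed_biUnion Cᶜ) hsplit ?_).resolve_right fun hsub => ?_
  · rw [hdisjoint.inter_eq, inter_empty]
  · obtain ⟨x, hxT, hxC⟩ := hmeets
    exact hdisjoint.notMem_of_mem_left hxC (hsub hxT)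

lemma exists_reflTransGen_of_isPreconnected (hs : LocallyFinite s) (hclosed : ∀ i, IsClosed (s i))
    (hT : IsPreconnected T) (hcover : T ⊆ ⋃ i, s i) (hxT : x ∈ T) (hyT : y ∈ T) (hx : x ∈ s i) :
    ∃ j, y ∈ s j ∧ ReflTransGen (fun i j => (s i ∩ s j).Nonempty) i j := by
  let reachable : Set ι := {j | ReflTransGen (fun i j => (s i ∩ s j).Nonempty) i j}
  have hdisjoint : ∀ j ∈ reachable, ∀ k ∉ reachable, Disjoint (s j) (s k) := fun j hj k hk =>
    not_not.1 fun hjk => hk (hj.tail (not_disjoint_iff_nonempty_inter.1 hjk))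
  have hmeets : (T ∩ ⋃ j ∈ reachable, s j).Nonempty :=
    ⟨x, hxT, mem_biUnion (show i ∈ reachable from .refl) hx⟩
  obtain ⟨j, hj, hyj⟩ := mem_iUnion₂.1 <|
    subset_biUnion_of_isPreconnected_of_disjoint hs hclosed hT hcover hdisjoint hmeets hyT
  exact ⟨j, hyj, hj⟩

lemma joinedIn_iUnion_of_reflTransGen (hs : ∀ i, IsPathConnected (s i))
    (hij : ReflTransGen (fun i j => (s i ∩ s j).Nonempty) i j) (hx : x ∈ s i) (hy : y ∈ s j) :
    JoinedIn (⋃ i, s i) x y := by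
  have joinedIn_of_mem {k : ι} {u v : X} (hu : u ∈ s k) (hv : v ∈ s k) :
      JoinedIn (⋃ i, s i) u v :=
    ((hs k).joinedIn u hu v hv).mono (subset_iUnion s k)
  induction hij generalizing y with
  | refl => exact joinedIn_of_mem hx hy
  | tail _ hmeet ih =>
    obtain ⟨z, hz, hz'⟩ := hmeet
    exact (ih hz).trans (joinedIn_of_mem hz' hy)

theorem joinedIn_iUnion_iff_exists_reflTransGen (hs : LocallyFinite s)
    (hclosed : ∀ i, IsClosed (s i)) (hpath : ∀ i, IsPathConnected (s i)) :
    JoinedIn (⋃ i, s i) x y ↔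
      ∃ i j, x ∈ s i ∧ y ∈ s j ∧ ReflTransGen (fun i j => (s i ∩ s j).Nonempty) i j := by
  constructor
  · rintro ⟨γ, hγ⟩
    obtain ⟨i, hi⟩ := mem_iUnion.1 (γ.source ▸ hγ 0)
    obtain ⟨j, hj, hij⟩ := exists_reflTransGen_of_isPreconnected hs hclosed
      (isPreconnected_range γ.continuous) (range_subset_iff.2 hγ) ⟨0, γ.source⟩ ⟨1, γ.target⟩ hi
    exact ⟨i, j, hi, hj, hij⟩
  · rintro ⟨i, j, hi, hj, hij⟩
    exact joinedIn_iUnion_of_reflTransGen hpath hij hi hj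

end Covers

section ClosedBalls

variable {E : Type*} [SeminormedAddCommGroup E] [NormedSpace ℝ E]

lemma nonempty_closedBall_inter_closedBall_iff {x y : E} {δ ε : ℝ} (hδ : 0 ≤ δ) (hε : 0 ≤ ε) :
    (closedBall x δ ∩ closedBall y ε).Nonempty ↔ dist x y ≤ δ + ε := by
  rw [← not_disjoint_iff_nonempty_inter, disjoint_closedBall_closedBall_iff hδ hε, not_lt]

theorem joinedIn_union_closedBalls_iff_exists_sequence_general {I : Type*} (g : I → E) (r : I → ℝ)
    (hr : ∀ i, 0 ≤ r i) (hfin : LocallyFinite fun i => closedBall (g i) (r i)) (S D : E) :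
    JoinedIn (⋃ i, closedBall (g i) (r i)) S D ↔
      ∃ (k : ℕ) (hk : 1 ≤ k) (seq : Fin k → I),
        S ∈ closedBall (g (seq ⟨0, hk⟩)) (r (seq ⟨0, hk⟩)) ∧
        D ∈ closedBall (g (seq ⟨k - 1, Nat.sub_lt hk one_pos⟩))
              (r (seq ⟨k - 1, Nat.sub_lt hk one_pos⟩)) ∧
        ∀ (j : ℕ) (h : j + 1 < k),
          dist (g (seq ⟨j, Nat.lt_of_succ_lt h⟩)) (g (seq ⟨j + 1, h⟩)) ≤
            r (seq ⟨j, Nat.lt_of_succ_lt h⟩) + r (seq ⟨j + 1, h⟩) := by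
  have hpath (i : I) : IsPathConnected (closedBall (g i) (r i)) :=
    (convex_closedBall (g i) (r i)).isPathConnected (nonempty_closedBall.2 (hr i))
  rw [joinedIn_iUnion_iff_exists_reflTransGen hfin (fun _ => isClosed_closedBall) hpath]
  simp only [nonempty_closedBall_inter_closedBall_iff (hr _) (hr _)]
  exact exists_reflTransGen_iff_exists_fin_sequence

end ClosedBalls

/-- For finitely many closed coverage disks, there is a continuous path from `S`
to `D` staying in the union of the disks if and only if there is a finite base-station sequence
`seq` whose first disk contains `S`, whose last disk contains `D`, and whose consecutive disks
intersect (`dist ≤` sum of radii). -/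
theorem joinedIn_union_closedBalls_iff_exists_sequence
    {I : Type*} [Fintype I]
    (g : I → EuclideanSpace ℝ (Fin 2)) (r : I → ℝ) (hr : ∀ i, 0 ≤ r i)
    (S D : EuclideanSpace ℝ (Fin 2)) :
    JoinedIn (⋃ i, Metric.closedBall (g i) (r i)) S D ↔
      ∃ (k : ℕ) (hk : 1 ≤ k) (seq : Fin k → I),
        S ∈ Metric.closedBall (g (seq ⟨0, hk⟩)) (r (seq ⟨0, hk⟩)) ∧
        D ∈ Metric.closedBall (g (seq ⟨k - 1, Nat.sub_lt hk one_pos⟩))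
              (r (seq ⟨k - 1, Nat.sub_lt hk one_pos⟩)) ∧
        ∀ (j : ℕ) (h : j + 1 < k),
          dist (g (seq ⟨j, by omega⟩)) (g (seq ⟨j + 1, h⟩)) ≤
            r (seq ⟨j, by omega⟩) + r (seq ⟨j + 1, h⟩) :=
  joinedIn_union_closedBalls_iff_exists_sequence_general g r hr (locallyFinite_of_finite _) S D
end

section
/- Let g₁, g₂ ∈ ℝ² and r₁, r₂ > 0 be such that the circles {x : dist(x,g₁) = r₁} and {x : dist(x,g₂) = r₂} intersect in exactly two distinct points m₁ ≠ m₂. Let p ∈ B̄(g₁,r₁) \ B̄(g₂,r₂) and q ∈ B̄(g₂,r₂) \ B̄(g₁,r₁), and suppose the closed segment [p,q] is contained in B̄(g₁,r₁) ∪ B̄(g₂,r₂). Then the segment [p,q] intersects the closed segment [m₁,m₂]. -/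
/-!
The difference of the powers of a point with respect to the two spheres changes sign along
`[p, q]`, so some `x ∈ [p, q]` has the same power with respect to both. As `x` lies in one of the
balls, this common power is nonpositive, so `x` lies in the first ball. Moving `x` in a direction
`v` orthogonal to the line of centers keeps the two powers equal, so the points where the line
`x + ℝ v` leaves the first ball lie on both spheres, on either side of `x`. Hence `x` is in the
convex hull of the intersection of the spheres.
-/

open EuclideanGeometry Metric Module
open scoped RealInnerProductSpace

section Power

variable {V P : Type*} [NormedAddCommGroup V] [InnerProductSpace ℝ V] [MetricSpace P]
  [NormedAddTorsor V P]

theorem sphere_power_vadd (s : Sphere P) (v : V) (x : P) :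
    s.power (v +ᵥ x) = s.power x + 2 * ⟪v, x -ᵥ s.center⟫ + ‖v‖ ^ 2 := by
  simp only [Sphere.power, dist_eq_norm_vsub V, vadd_vsub_assoc, norm_add_sq_real]
  ring

theorem sphere_power_vadd_eq_of_inner_eq_zero {s₁ s₂ : Sphere P} {v : V} {x : P}
    (hv : ⟪v, s₂.center -ᵥ s₁.center⟫ = 0) (hx : s₁.power x = s₂.power x) :
    s₁.power (v +ᵥ x) = s₂.power (v +ᵥ x) := by
  have hinner : ⟪v, x -ᵥ s₁.center⟫ = ⟪v, x -ᵥ s₂.center⟫ := by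
    rw [← vsub_add_vsub_cancel x s₂.center s₁.center, inner_add_right, hv, add_zero]
  rw [sphere_power_vadd, sphere_power_vadd, hx, hinner]

theorem continuous_sphere_power (s : Sphere P) : Continuous s.power := by
  unfold Sphere.power
  fun_prop

end Power

section NormedSpace

variable {E : Type*} [NormedAddCommGroup E] [NormedSpace ℝ E]

theorem exists_nonneg_add_smul_mem_sphere {c x v : E} {r : ℝ} (hx : x ∈ closedBall c r)
    (hv : v ≠ 0) : ∃ t : ℝ, 0 ≤ t ∧ x + t • v ∈ sphere c r := by
  have hcont : Continuous fun t : ℝ ↦ dist (x + t • v) c := by fun_prop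
  have hv' : 0 < ‖v‖ := norm_pos_iff.mpr hv
  have hr : 0 ≤ r := dist_nonneg.trans hx
  set T : ℝ := 2 * r / ‖v‖
  have hT : 0 ≤ T := by positivity
  have hfar : r ≤ dist (x + T • v) c := by
    have hmove : dist (x + T • v) x = 2 * r := by
      rw [dist_self_add_left, norm_smul, Real.norm_of_nonneg hT, div_mul_cancel₀ _ hv'.ne']
    linarith [dist_triangle_right (x + T • v) x c, mem_closedBall.mp hx]
  obtain ⟨t, ht, hxt⟩ := intermediate_value_Icc hT hcont.continuousOn
    ⟨by simpa using hx, hfar⟩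
  exact ⟨t, ht.1, hxt⟩

theorem mem_segment_add_smul_add_smul_neg (x v : E) {a b : ℝ} (ha : 0 ≤ a) (hb : 0 ≤ b) :
    x ∈ segment ℝ (x + a • v) (x + b • -v) := by
  rw [mem_segment_iff_sameRay, sub_add_cancel_left, add_sub_cancel_left, ← smul_neg]
  exact ((SameRay.refl (-v)).nonneg_smul_left ha).nonneg_smul_right hb

end NormedSpace

section InnerProductSpace

variable {V : Type*} [NormedAddCommGroup V] [InnerProductSpace ℝ V]

theorem exists_ne_zero_inner_eq_zero_of_one_lt_rank (hV : 1 < Module.rank ℝ V) (w : V) :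
    ∃ v : V, v ≠ 0 ∧ ⟪v, w⟫ = 0 := by
  have hspan : (ℝ ∙ w) ≠ ⊤ := fun htop ↦ by
    have hle : Module.rank ℝ (ℝ ∙ w) ≤ 1 := by simpa using rank_span_le (R := ℝ) {w}
    rw [htop, rank_top] at hle
    exact hle.not_gt hV
  obtain ⟨v, hv, hv0⟩ :=
    Submodule.exists_mem_ne_zero_of_ne_bot (mt Submodule.orthogonal_eq_bot_iff.mp hspan)
  exact ⟨v, hv0, Submodule.mem_orthogonal_singleton_iff_inner_left.mp hv⟩

theorem exists_nonneg_add_smul_mem_sphere_inter_sphere {s₁ s₂ : Sphere V} {x v : V}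
    (hr₂ : 0 ≤ s₂.radius) (hx : x ∈ closedBall s₁.center s₁.radius)
    (hpow : s₁.power x = s₂.power x) (hv : v ≠ 0) (hperp : ⟪v, s₂.center - s₁.center⟫ = 0) :
    ∃ t : ℝ, 0 ≤ t ∧ x + t • v ∈ sphere s₁.center s₁.radius ∩ sphere s₂.center s₂.radius := by
  have hr₁ : 0 ≤ s₁.radius := dist_nonneg.trans hx
  obtain ⟨t, ht, hmem₁⟩ := exists_nonneg_add_smul_mem_sphere hx hv
  have hpow_t : s₁.power (x + t • v) = s₂.power (x + t • v) := by
    rw [add_comm]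
    exact sphere_power_vadd_eq_of_inner_eq_zero
      (by rw [vsub_eq_sub, real_inner_smul_left, hperp, mul_zero]) hpow
  have hzero : s₁.power (x + t • v) = 0 := (Sphere.power_eq_zero_iff_mem_sphere hr₁).mpr hmem₁
  exact ⟨t, ht, hmem₁, (Sphere.power_eq_zero_iff_mem_sphere hr₂).mp (hpow_t ▸ hzero)⟩

theorem mem_convexHull_sphere_inter_sphere (hV : 1 < Module.rank ℝ V) {s₁ s₂ : Sphere V} {x : V}
    (hr₂ : 0 ≤ s₂.radius) (hx : x ∈ closedBall s₁.center s₁.radius)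
    (hpow : s₁.power x = s₂.power x) :
    x ∈ convexHull ℝ (sphere s₁.center s₁.radius ∩ sphere s₂.center s₂.radius) := by
  obtain ⟨v, hv, hperp⟩ :=
    exists_ne_zero_inner_eq_zero_of_one_lt_rank hV (s₂.center - s₁.center)
  have hperp_neg : ⟪-v, s₂.center - s₁.center⟫ = 0 := by rw [inner_neg_left, hperp, neg_zero]
  obtain ⟨a, ha, hmem_a⟩ :=
    exists_nonneg_add_smul_mem_sphere_inter_sphere hr₂ hx hpow hv hperp
  obtain ⟨b, hb, hmem_b⟩ :=
    exists_nonneg_add_smul_mem_sphere_inter_sphere hr₂ hx hpow (neg_ne_zero.mpr hv) hperp_neg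
  exact segment_subset_convexHull hmem_a hmem_b (mem_segment_add_smul_add_smul_neg x v ha hb)

theorem exists_mem_segment_power_eq {s₁ s₂ : Sphere V} {p q : V}
    (hp : s₁.power p ≤ s₂.power p) (hq : s₂.power q ≤ s₁.power q) :
    ∃ x ∈ segment ℝ p q, s₁.power x = s₂.power x :=
  (convex_segment p q).isPreconnected.intermediate_value₂ (left_mem_segment ℝ p q)
    (right_mem_segment ℝ p q) (continuous_sphere_power s₁).continuousOn
    (continuous_sphere_power s₂).continuousOn hp hq

theorem segment_crossing_disks_meets_chord_general (hV : 1 < Module.rank ℝ V)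
    {g₁ g₂ p q : V} {r₁ r₂ : ℝ}
    (hp : p ∈ closedBall g₁ r₁ \ closedBall g₂ r₂)
    (hq : q ∈ closedBall g₂ r₂ \ closedBall g₁ r₁)
    (hseg : segment ℝ p q ⊆ closedBall g₁ r₁ ∪ closedBall g₂ r₂) :
    (segment ℝ p q ∩ convexHull ℝ (sphere g₁ r₁ ∩ sphere g₂ r₂)).Nonempty := by
  let s₁ : Sphere V := ⟨g₁, r₁⟩
  let s₂ : Sphere V := ⟨g₂, r₂⟩
  have hr₁ : 0 ≤ r₁ := dist_nonneg.trans hp.1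
  have hr₂ : 0 ≤ r₂ := dist_nonneg.trans hq.1
  have hball₁ (y : V) : s₁.power y ≤ 0 ↔ y ∈ closedBall g₁ r₁ :=
    Sphere.power_nonpos_iff_dist_center_le_radius hr₁
  have hball₂ (y : V) : s₂.power y ≤ 0 ↔ y ∈ closedBall g₂ r₂ :=
    Sphere.power_nonpos_iff_dist_center_le_radius hr₂
  simp only [Set.mem_sdiff, ← hball₁, ← hball₂, not_le] at hp hq
  obtain ⟨x, hx, hpow⟩ :=
    exists_mem_segment_power_eq (hp.1.trans hp.2.le) (hq.1.trans hq.2.le)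
  have hx₁ : x ∈ closedBall g₁ r₁ := (hseg hx).elim id fun hx₂ ↦
    (hball₁ x).mp (hpow.trans_le ((hball₂ x).mpr hx₂))
  exact ⟨x, hx, mem_convexHull_sphere_inter_sphere (s₁ := s₁) hV hr₂ hx₁ hpow⟩

end InnerProductSpace

/-- If the boundary circles of two disks intersect in exactly the two distinct
points `m₁ ≠ m₂`, `p` lies in the first disk only, `q` lies in the second disk only, and the
segment `[p,q]` stays inside the union of the two disks, then `[p,q]` meets the chord
`[m₁,m₂]`. -/
theorem segment_crossing_disks_meets_chord
    (g₁ g₂ m₁ m₂ p q : EuclideanSpace ℝ (Fin 2)) (r₁ r₂ : ℝ)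
    (hr₁ : 0 < r₁) (hr₂ : 0 < r₂) (hm : m₁ ≠ m₂)
    (hcirc : Metric.sphere g₁ r₁ ∩ Metric.sphere g₂ r₂ = {m₁, m₂})
    (hp : p ∈ Metric.closedBall g₁ r₁ \ Metric.closedBall g₂ r₂)
    (hq : q ∈ Metric.closedBall g₂ r₂ \ Metric.closedBall g₁ r₁)
    (hseg : segment ℝ p q ⊆ Metric.closedBall g₁ r₁ ∪ Metric.closedBall g₂ r₂) :
    (segment ℝ p q ∩ segment ℝ m₁ m₂).Nonempty := by
  have hrank : 1 < Module.rank ℝ (EuclideanSpace ℝ (Fin 2)) := by simp [← finrank_eq_rank]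
  simpa only [hcirc, convexHull_pair] using
    segment_crossing_disks_meets_chord_general hrank hp hq hseg
end

section
/- Let g₁, g₂ ∈ ℝ² and r₁, r₂ > 0 be such that the circles {x : dist(x,g₁) = r₁} and {x : dist(x,g₂) = r₂} intersect in exactly two distinct points m₁ ≠ m₂, and let L be the (affine) line through m₁ and m₂. Then every point of (B̄(g₁,r₁) ∪ B̄(g₂,r₂)) ∩ L lies on the closed segment [m₁, m₂]; that is, (B̄(g₁,r₁) ∪ B̄(g₂,r₂)) ∩ L = [m₁, m₂]. -/
open Metric

section StrictConvexSpace

variable {V P : Type*} [NormedAddCommGroup V] [NormedSpace ℝ V] [StrictConvexSpace ℝ V]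
  [PseudoMetricSpace P] [NormedAddTorsor V P] {g g₁ g₂ m₁ m₂ : P} {r r₁ r₂ : ℝ}

lemma closedBall_inter_affineSpan_pair_of_mem_sphere
    (h₁ : m₁ ∈ sphere g r) (h₂ : m₂ ∈ sphere g r) :
    closedBall g r ∩ line[ℝ, m₁, m₂] = affineSegment ℝ m₁ m₂ := by
  obtain rfl | hne := eq_or_ne m₁ m₂
  · simpa using sphere_subset_closedBall h₁
  ext x
  constructor
  · rintro ⟨hx_ball, hx_line⟩
    have hcollinear : Collinear ℝ {m₁, x, m₂} := by
      rw [Set.insert_comm]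
      exact collinear_insert_of_mem_affineSpan_pair hx_line
    exact hcollinear.wbtw_of_dist_eq_of_dist_le h₁ hx_ball h₂ hne
  · intro (hx : Wbtw ℝ m₁ x m₂)
    have hdist : dist x g ≤ max (dist m₁ g) (dist m₂ g) := hx.dist_le_max_dist g
    rw [mem_sphere.1 h₁, mem_sphere.1 h₂, max_self] at hdist
    exact ⟨hdist, hx.mem_affineSpan⟩

theorem union_closedBalls_inter_radical_line_eq_chord_general
    (h₁ : m₁ ∈ sphere g₁ r₁ ∩ sphere g₂ r₂) (h₂ : m₂ ∈ sphere g₁ r₁ ∩ sphere g₂ r₂) :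
    (closedBall g₁ r₁ ∪ closedBall g₂ r₂) ∩ line[ℝ, m₁, m₂] = affineSegment ℝ m₁ m₂ := by
  rw [Set.union_inter_distrib_right, closedBall_inter_affineSpan_pair_of_mem_sphere h₁.1 h₂.1,
    closedBall_inter_affineSpan_pair_of_mem_sphere h₁.2 h₂.2, Set.union_self]

end StrictConvexSpace

/-- If the boundary circles of two disks intersect in exactly the two distinct
points `m₁ ≠ m₂`, then the union of the two closed disks meets the line through `m₁` and `m₂`
exactly in the closed chord `[m₁, m₂]`. -/
theorem union_closedBalls_inter_radical_line_eq_chord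
    (g₁ g₂ m₁ m₂ : EuclideanSpace ℝ (Fin 2)) (r₁ r₂ : ℝ)
    (hr₁ : 0 < r₁) (hr₂ : 0 < r₂) (hm : m₁ ≠ m₂)
    (hcirc : Metric.sphere g₁ r₁ ∩ Metric.sphere g₂ r₂ = {m₁, m₂}) :
    (Metric.closedBall g₁ r₁ ∪ Metric.closedBall g₂ r₂) ∩
        (affineSpan ℝ {m₁, m₂} : Set (EuclideanSpace ℝ (Fin 2))) =
      segment ℝ m₁ m₂ := by
  rw [← affineSegment_eq_segment]
  exact union_closedBalls_inter_radical_line_eq_chord_general (by simp [hcirc]) (by simp [hcirc])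
end
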